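/- arXiv:2501.04853 — 2 statements merged into one kernel-verified Lean document; each statement's English description precedes it below -/
import Mathlib

section
/- Fix a path d = (d1,d2). Suppose Assumption MAR holds, P(D = d, S = 1) > 0, P(D2 = d2 | X) > 0 a.s., and P(D1 = d1 | D2 = d2, X) > 0 a.s. under the law of X given D2 = d2. Then the conditional outcome mean is identified from the observed subsample: m_d(X) = E[ΔY | D = d, S = 1, X] a.s. under the law of X given D = d (equivalently, given (D = d, S = 1)). -/
open MeasureTheory Set
open scoped Classical

noncomputable section

namespace DIDMissing

variable {Ω : Type*} {𝓧 : Type*}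

/-- Real-valued indicator of a set. -/
def ind (A : Set Ω) : Ω → ℝ := A.indicator fun _ => (1 : ℝ)

/-- All treatment paths `{0,1}²` (coded as reals). -/
def allPaths : Set (ℝ × ℝ) := {(0, 0), (0, 1), (1, 0), (1, 1)}

/-- The three treated paths `{(1,1), (0,1), (1,0)}`. -/
def threePaths : Set (ℝ × ℝ) := {(1, 1), (0, 1), (1, 0)}

/-- The event `{D = d}` for a treatment path `d = (d₁, d₂)`. -/
def evD (D1 D2 : Ω → ℝ) (d : ℝ × ℝ) : Set Ω := {ω | D1 ω = d.1 ∧ D2 ω = d.2}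

/-- The event `{D₂ = b}`. -/
def evD2 (D2 : Ω → ℝ) (b : ℝ) : Set Ω := {ω | D2 ω = b}

/-- `g` is a (measurable-in-the-covariate) version of the conditional mean `E[Z ∣ A, X]`:
for every bounded measurable `h`, `E[1_A · Z · h(X)] = E[1_A · g(X) · h(X)]`. -/
def IsCondMeanGiven [MeasurableSpace Ω] [MeasurableSpace 𝓧] (P : Measure Ω) (X : Ω → 𝓧)
    (A : Set Ω) (Z : Ω → ℝ) (g : 𝓧 → ℝ) : Prop :=
  Measurable g ∧
    ∀ h : 𝓧 → ℝ, Measurable h → (∃ C, ∀ x, |h x| ≤ C) →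
      ∫ ω, ind A ω * Z ω * h (X ω) ∂P = ∫ ω, ind A ω * g (X ω) * h (X ω) ∂P

/-- Assumption DID for a path `d` relative to `d' = (0,0)`:
(i) no anticipation, `E[Y₀(d) ∣ D = d, X] = E[Y₀(0,0) ∣ D = d, X]` a.s., stated in the
version-free integral form; and (ii) conditional parallel trends, stated as the existence
of a common version of `E[Y₂(0,0) − Y₀(0,0) ∣ X]` and `E[Y₂(0,0) − Y₀(0,0) ∣ D = d, X]`. -/
def DID [MeasurableSpace Ω] [MeasurableSpace 𝓧] (P : Measure Ω) (X : Ω → 𝓧)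
    (D1 D2 : Ω → ℝ) (Y0p Y2p : ℝ × ℝ → Ω → ℝ) (d : ℝ × ℝ) : Prop :=
  (∀ h : 𝓧 → ℝ, Measurable h → (∃ C, ∀ x, |h x| ≤ C) →
      ∫ ω, ind (evD D1 D2 d) ω * Y0p d ω * h (X ω) ∂P
        = ∫ ω, ind (evD D1 D2 d) ω * Y0p (0, 0) ω * h (X ω) ∂P) ∧
  (∃ tr : 𝓧 → ℝ,
      IsCondMeanGiven P X Set.univ (fun ω => Y2p (0, 0) ω - Y0p (0, 0) ω) tr ∧
      IsCondMeanGiven P X (evD D1 D2 d) (fun ω => Y2p (0, 0) ω - Y0p (0, 0) ω) tr)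

/-- Assumption MAR: `S ⟂ (D₁, ΔY) ∣ (D₂, X)`, where `q d₂` is a version of the
missing-data probability `P(S = 1 ∣ D₂ = d₂, X)`, which is `(0,1]`-valued a.s. -/
def MAR [MeasurableSpace Ω] [MeasurableSpace 𝓧] (P : Measure Ω) (X : Ω → 𝓧)
    (D1 D2 S Y0 Y2 : Ω → ℝ) (q : ℝ → 𝓧 → ℝ) : Prop :=
  (∀ d2 ∈ ({0, 1} : Set ℝ), IsCondMeanGiven P X (evD2 D2 d2) S (q d2)) ∧
  (∀ d2 ∈ ({0, 1} : Set ℝ), ∀ᵐ ω ∂P, 0 < q d2 (X ω) ∧ q d2 (X ω) ≤ 1) ∧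
  (∀ d2 ∈ ({0, 1} : Set ℝ), ∀ f : ℝ × ℝ → ℝ, Measurable f → (∃ C, ∀ p, |f p| ≤ C) →
      ∀ h : 𝓧 → ℝ, Measurable h → (∃ C, ∀ x, |h x| ≤ C) →
        ∫ ω, ind (evD2 D2 d2) ω * S ω * f (D1 ω, Y2 ω - Y0 ω) * h (X ω) ∂P
          = ∫ ω, ind (evD2 D2 d2) ω * q d2 (X ω) * f (D1 ω, Y2 ω - Y0 ω) * h (X ω) ∂P)

/-- The path-dependent ATT `τ_{d,(0,0)} = E[Y₂(d) − Y₂(0,0) ∣ D = d]`. -/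
def tau [MeasurableSpace Ω] (P : Measure Ω) (D1 D2 : Ω → ℝ)
    (Y2p : ℝ × ℝ → Ω → ℝ) (d : ℝ × ℝ) : ℝ :=
  (P (evD D1 D2 d)).toReal⁻¹ * ∫ ω in evD D1 D2 d, (Y2p d ω - Y2p (0, 0) ω) ∂P

/-! Under MAR, selection is ignorable given the outcome as well as the covariates:
`E[S ∣ D₁, ΔY, D₂ = d₂, X] = q_{d₂}(X)`, and this persists on `{D = d}`, an event in the larger
σ-algebra. Computing `E[S ΔY ∣ D = d, X]` in two ways gives `q_{d₂}(X) m_d(X)` by the tower property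
and, by the Bayes rule, `E[ΔY ∣ D = d, S = 1, X] q_{d₂}(X)`; then `q_{d₂}(X) > 0` is cancelled. -/

section ConditionalExpectation

variable {E : Type*} [NormedAddCommGroup E] [NormedSpace ℝ E]
  {m m' mΩ : MeasurableSpace Ω} {μ : Measure Ω}

theorem setIntegral_preimage_prodMk_eq_of_forall_inter {α β : Type*}
    [MeasurableSpace α] [MeasurableSpace β]
    {U : Ω → α} {V : Ω → β} (hU : Measurable U) (hV : Measurable V) {f g : Ω → E}
    (hf : Integrable f μ) (hg : Integrable g μ)
    (h : ∀ A B, MeasurableSet A → MeasurableSet B →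
      ∫ ω in U ⁻¹' A ∩ V ⁻¹' B, f ω ∂μ = ∫ ω in U ⁻¹' A ∩ V ⁻¹' B, g ω ∂μ)
    {C : Set (α × β)} (hC : MeasurableSet C) :
    ∫ ω in (fun ω => (U ω, V ω)) ⁻¹' C, f ω ∂μ = ∫ ω in (fun ω => (U ω, V ω)) ⁻¹' C, g ω ∂μ := by
  have hUV : Measurable fun ω => (U ω, V ω) := hU.prodMk hV
  have map_apply {k : Ω → E} (hk : Integrable k μ) {C : Set (α × β)} (hC : MeasurableSet C) :
      (μ.withDensityᵥ k).map (fun ω => (U ω, V ω)) C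
        = ∫ ω in (fun ω => (U ω, V ω)) ⁻¹' C, k ω ∂μ := by
    rw [VectorMeasure.map_apply _ hUV hC, withDensityᵥ_apply hk (hUV hC)]
  have map_rectangle {A : Set α} {B : Set β} (hA : MeasurableSet A) (hB : MeasurableSet B) :
      (μ.withDensityᵥ f).map (fun ω => (U ω, V ω)) (A ×ˢ B)
        = (μ.withDensityᵥ g).map (fun ω => (U ω, V ω)) (A ×ˢ B) := by
    rw [map_apply hf (hA.prod hB), map_apply hg (hA.prod hB)]
    exact h A B hA hB
  have map_eq : (μ.withDensityᵥ f).map (fun ω => (U ω, V ω))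
      = (μ.withDensityᵥ g).map fun ω => (U ω, V ω) := by
    refine VectorMeasure.ext_of_generateFrom _ ?_ generateFrom_prod.symm isPiSystem_prod ?_
    · rintro _ ⟨A, hA, B, hB, rfl⟩
      exact map_rectangle hA hB
    · rw [← univ_prod_univ, map_rectangle .univ .univ]
  rw [← map_apply hf hC, map_eq, map_apply hg hC]

variable [IsFiniteMeasure μ]

theorem ae_eq_condExp_comap_of_forall_setIntegral_eq [CompleteSpace E] [MeasurableSpace 𝓧]
    {X : Ω → 𝓧} (hX : Measurable X) {Z : Ω → E} (hZ : Integrable Z μ) {g : 𝓧 → E}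
    (hg : StronglyMeasurable g) (hgX : Integrable (fun ω => g (X ω)) μ)
    (h : ∀ B, MeasurableSet B → ∫ ω in X ⁻¹' B, g (X ω) ∂μ = ∫ ω in X ⁻¹' B, Z ω ∂μ) :
    (fun ω => g (X ω)) =ᵐ[μ] μ[Z | MeasurableSpace.comap X inferInstance] := by
  refine ae_eq_condExp_of_forall_setIntegral_eq hX.comap_le hZ
    (fun _ _ _ => hgX.integrableOn) ?_
    (hg.comp_measurable (comap_measurable X)).aestronglyMeasurable
  rintro _ ⟨B, hB, rfl⟩ -
  exact h B hB

theorem condExp_indicator_ae_eq_mul_condExp_indicator_one (hm : m ≤ mΩ) {T : Set Ω}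
    (hT : MeasurableSet T) {Z g : Ω → ℝ} (hZ : IntegrableOn Z T μ) (hg : StronglyMeasurable[m] g)
    (hgZ : g =ᵐ[μ.restrict T] (μ.restrict T)[Z | m]) :
    μ[T.indicator Z | m] =ᵐ[μ] g * μ[T.indicator 1 | m] := by
  have hgT : Integrable (T.indicator g) μ :=
    (integrable_indicator_iff hT).2 (integrable_condExp.congr hgZ.symm)
  have indicator_eq_mul : T.indicator g = g * T.indicator 1 := by
    ext ω
    simp [indicator_apply]
  have same_condExp : μ[T.indicator g | m] =ᵐ[μ] μ[T.indicator Z | m] := by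
    refine ae_eq_condExp_of_forall_setIntegral_eq hm (hZ.integrable_indicator hT)
      (fun _ _ _ => integrable_condExp.integrableOn) (fun s hs _ => ?_)
      stronglyMeasurable_condExp.aestronglyMeasurable
    calc ∫ ω in s, μ[T.indicator g | m] ω ∂μ
        = ∫ ω in s, T.indicator g ω ∂μ := setIntegral_condExp hm hgT hs
      _ = ∫ ω in s, g ω ∂μ.restrict T := by
        rw [setIntegral_indicator hT, Measure.restrict_restrict (hm s hs)]
      _ = ∫ ω in s, (μ.restrict T)[Z | m] ω ∂μ.restrict T :=
        integral_congr_ae (ae_restrict_of_ae hgZ)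
      _ = ∫ ω in s, Z ω ∂μ.restrict T := setIntegral_condExp hm hZ hs
      _ = ∫ ω in s, T.indicator Z ω ∂μ := by
        rw [setIntegral_indicator hT, Measure.restrict_restrict (hm s hs)]
  calc μ[T.indicator Z | m]
      =ᵐ[μ] μ[g * T.indicator 1 | m] := by rw [← indicator_eq_mul]; exact same_condExp.symm
    _ =ᵐ[μ] g * μ[T.indicator 1 | m] :=
      condExp_mul_of_stronglyMeasurable_left hg (indicator_eq_mul ▸ hgT)
        ((integrable_const 1).indicator hT)

theorem condExp_indicator_ae_eq_mul_of_condExp_indicator_one (hmm' : m ≤ m') (hm' : m' ≤ mΩ)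
    {T : Set Ω} (hT : MeasurableSet T) {Z p : Ω → ℝ} (hZ : Integrable Z μ)
    (hZm : StronglyMeasurable[m'] Z) (hp : StronglyMeasurable[m] p)
    (hpT : μ[T.indicator 1 | m'] =ᵐ[μ] p) :
    μ[T.indicator Z | m] =ᵐ[μ] p * μ[Z | m] := by
  have indicator_eq_mul : T.indicator Z = T.indicator 1 * Z := by
    ext ω
    simp [indicator_apply]
  have inner : μ[T.indicator Z | m'] =ᵐ[μ] p * Z := by
    rw [indicator_eq_mul]
    refine (condExp_mul_of_stronglyMeasurable_right hZm (indicator_eq_mul ▸ hZ.indicator hT)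
      ((integrable_const 1).indicator hT)).trans ?_
    exact hpT.mul .rfl
  calc μ[T.indicator Z | m]
      =ᵐ[μ] μ[μ[T.indicator Z | m'] | m] := (condExp_condExp_of_le hmm' hm').symm
    _ =ᵐ[μ] μ[p * Z | m] := condExp_congr_ae inner
    _ =ᵐ[μ] p * μ[Z | m] :=
      condExp_mul_of_stronglyMeasurable_left hp (integrable_condExp.congr inner) hZ

theorem condExp_ae_eq_of_ignorable_selection (hmm' : m ≤ m') (hm' : m' ≤ mΩ) {T : Set Ω}
    (hT : MeasurableSet T) {Z p g : Ω → ℝ} (hZ : Integrable Z μ) (hZm : StronglyMeasurable[m'] Z)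
    (hp : StronglyMeasurable[m] p) (hpT : μ[T.indicator 1 | m'] =ᵐ[μ] p)
    (hp0 : ∀ᵐ ω ∂μ, p ω ≠ 0) (hg : StronglyMeasurable[m] g)
    (hgZ : g =ᵐ[μ.restrict T] (μ.restrict T)[Z | m]) :
    μ[Z | m] =ᵐ[μ] g := by
  have hpT' : μ[T.indicator 1 | m] =ᵐ[μ] p := by
    have hp_int : Integrable p μ := integrable_condExp.congr hpT
    calc μ[T.indicator 1 | m]
        =ᵐ[μ] μ[μ[T.indicator 1 | m'] | m] := (condExp_condExp_of_le hmm' hm').symm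
      _ =ᵐ[μ] μ[p | m] := condExp_congr_ae hpT
      _ = p := condExp_of_stronglyMeasurable (hmm'.trans hm') hp hp_int
  filter_upwards [condExp_indicator_ae_eq_mul_of_condExp_indicator_one hmm' hm' hT hZ hZm hp hpT,
    condExp_indicator_ae_eq_mul_condExp_indicator_one (hmm'.trans hm') hT hZ.integrableOn hg hgZ,
    hpT', hp0] with ω tower bayes hpω hω
  refine mul_left_cancel₀ hω ?_
  calc p ω * μ[Z | m] ω = g ω * μ[T.indicator 1 | m] ω := tower.symm.trans bayes
    _ = p ω * g ω := by rw [hpω, mul_comm]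

end ConditionalExpectation

theorem exists_abs_indicator_one_le {α : Type*} (B : Set α) :
    ∃ C, ∀ x, |B.indicator (1 : α → ℝ) x| ≤ C :=
  ⟨1, fun x => by by_cases hx : x ∈ B <;> simp [hx]⟩

section CondMeanGiven

variable [MeasurableSpace Ω] [MeasurableSpace 𝓧] {P : Measure Ω} {X : Ω → 𝓧}

theorem integral_ind_mul_mul_indicator_one_comp (hX : Measurable X) {A : Set Ω}
    (hA : MeasurableSet A) {B : Set 𝓧} (hB : MeasurableSet B) (Z : Ω → ℝ) :
    ∫ ω, ind A ω * Z ω * B.indicator 1 (X ω) ∂P = ∫ ω in X ⁻¹' B, Z ω ∂P.restrict A := by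
  rw [Measure.restrict_restrict (hX hB), ← integral_indicator ((hX hB).inter hA)]
  congr 1 with ω
  by_cases hωA : ω ∈ A <;> by_cases hωB : X ω ∈ B <;> simp [ind, hωA, hωB]

theorem IsCondMeanGiven.setIntegral_eq {A : Set Ω} {Z : Ω → ℝ} {g : 𝓧 → ℝ}
    (hg : IsCondMeanGiven P X A Z g) (hX : Measurable X) (hA : MeasurableSet A)
    {B : Set 𝓧} (hB : MeasurableSet B) :
    ∫ ω in X ⁻¹' B, Z ω ∂P.restrict A = ∫ ω in X ⁻¹' B, g (X ω) ∂P.restrict A := by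
  have h := hg.2 (B.indicator 1) (measurable_one.indicator hB) (exists_abs_indicator_one_le B)
  rwa [integral_ind_mul_mul_indicator_one_comp hX hA hB,
    integral_ind_mul_mul_indicator_one_comp hX hA hB] at h

theorem IsCondMeanGiven.ae_eq_condExp [IsFiniteMeasure P] {A : Set Ω} {Z : Ω → ℝ} {g : 𝓧 → ℝ}
    (hg : IsCondMeanGiven P X A Z g) (hX : Measurable X) (hA : MeasurableSet A)
    (hZ : IntegrableOn Z A P) :
    (fun ω => g (X ω)) =ᵐ[P.restrict A]
      (P.restrict A)[Z | MeasurableSpace.comap X inferInstance] := by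
  -- `g ∘ X` is not assumed integrable, so compare on the sets `{|g| ≤ n}`, where it is bounded.
  let G (n : ℕ) : Set 𝓧 := {x | |g x| ≤ n}
  have hG (n : ℕ) : MeasurableSet (G n) := measurableSet_le hg.1.abs measurable_const
  have truncated (n : ℕ) : (fun ω => (G n).indicator g (X ω)) =ᵐ[P.restrict A]
      (X ⁻¹' G n).indicator ((P.restrict A)[Z | MeasurableSpace.comap X inferInstance]) := by
    have hbound (x : 𝓧) : ‖(G n).indicator g x‖ ≤ n := by
      by_cases hx : x ∈ G n
      · rwa [indicator_of_mem hx]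
      · simp [hx]
    have hgn : Measurable ((G n).indicator g) := hg.1.indicator (hG n)
    refine (ae_eq_condExp_comap_of_forall_setIntegral_eq hX (hZ.indicator (hX (hG n)))
      hgn.stronglyMeasurable (.of_bound (hgn.comp hX).aestronglyMeasurable n
        (.of_forall fun ω => hbound (X ω))) fun B hB => ?_).trans
      (condExp_indicator hZ ⟨G n, hG n, rfl⟩)
    change ∫ ω in X ⁻¹' B, (X ⁻¹' G n).indicator (fun ω => g (X ω)) ω ∂P.restrict A = _
    rw [setIntegral_indicator (hX (hG n)), setIntegral_indicator (hX (hG n)), ← preimage_inter,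
      hg.setIntegral_eq hX hA (hB.inter (hG n))]
  filter_upwards [ae_all_iff.2 truncated] with ω hω
  obtain ⟨n, hn⟩ := exists_nat_ge |g (X ω)|
  have hmem : X ω ∈ G n := hn
  simpa [hmem] using hω n

end CondMeanGiven

section Selection

variable [MeasurableSpace Ω] [MeasurableSpace 𝓧] {P : Measure Ω} [IsFiniteMeasure P]
  {X : Ω → 𝓧} {D1 D2 S Y0 Y2 : Ω → ℝ} {q : ℝ → 𝓧 → ℝ}

theorem MAR.condExp_selection_evD2 (hMAR : MAR P X D1 D2 S Y0 Y2 q) (hX : Measurable X)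
    (hD1 : Measurable D1) (hD2 : Measurable D2) (hΔ : Measurable fun ω => Y2 ω - Y0 ω)
    (hS : Integrable S P) {b : ℝ} (hb : b ∈ ({0, 1} : Set ℝ)) :
    (P.restrict (evD2 D2 b))[S | MeasurableSpace.comap
      (fun ω => ((D1 ω, Y2 ω - Y0 ω), X ω)) inferInstance]
        =ᵐ[P.restrict (evD2 D2 b)] fun ω => q b (X ω) := by
  obtain ⟨hq_mean, hq_range, hfactor⟩ := hMAR
  have hq : Measurable (q b) := (hq_mean b hb).1
  have hE : MeasurableSet (evD2 D2 b) := hD2 (measurableSet_singleton b)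
  have hW : Measurable fun ω => (D1 ω, Y2 ω - Y0 ω) := hD1.prodMk hΔ
  have hq_int : Integrable (fun ω => q b (X ω)) (P.restrict (evD2 D2 b)) := by
    refine .of_bound (hq.comp hX).aestronglyMeasurable 1 (ae_restrict_of_ae ?_)
    filter_upwards [hq_range b hb] with ω hω
    rw [Real.norm_of_nonneg hω.1.le]
    exact hω.2
  refine (ae_eq_condExp_comap_of_forall_setIntegral_eq (hW.prodMk hX) hS.integrableOn
    (hq.comp measurable_snd).stronglyMeasurable hq_int fun C hC => ?_).symm
  refine setIntegral_preimage_prodMk_eq_of_forall_inter hW hX hq_int hS.integrableOn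
    (fun B G hB hG => ?_) hC
  have h := hfactor b hb (B.indicator 1) (measurable_one.indicator hB)
    (exists_abs_indicator_one_le B) (G.indicator 1) (measurable_one.indicator hG)
    (exists_abs_indicator_one_le G)
  simp_rw [mul_assoc (_ * _) (B.indicator 1 _), ← indicator_prod_one] at h
  rw [integral_ind_mul_mul_indicator_one_comp (hW.prodMk hX) hE (hB.prod hG),
    integral_ind_mul_mul_indicator_one_comp (hW.prodMk hX) hE (hB.prod hG)] at h
  exact h.symm

theorem MAR.condExp_selection_evD (hMAR : MAR P X D1 D2 S Y0 Y2 q) (hX : Measurable X)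
    (hD1 : Measurable D1) (hD2 : Measurable D2) (hΔ : Measurable fun ω => Y2 ω - Y0 ω)
    (hS : Integrable S P) {d : ℝ × ℝ} (hd : d.2 ∈ ({0, 1} : Set ℝ)) :
    (P.restrict (evD D1 D2 d))[S | MeasurableSpace.comap
      (fun ω => ((D1 ω, Y2 ω - Y0 ω), X ω)) inferInstance]
        =ᵐ[P.restrict (evD D1 D2 d)] fun ω => q d.2 (X ω) := by
  have hF : MeasurableSet[MeasurableSpace.comap (fun ω => ((D1 ω, Y2 ω - Y0 ω), X ω)) inferInstance]
      (D1 ⁻¹' {d.1}) :=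
    ⟨{z | z.1.1 = d.1}, measurable_fst.fst (measurableSet_singleton d.1), rfl⟩
  have restrict_evD : P.restrict (evD D1 D2 d)
      = (P.restrict (evD2 D2 d.2)).restrict (D1 ⁻¹' {d.1}) :=
    (Measure.restrict_restrict (hD1 (measurableSet_singleton d.1))).symm
  rw [restrict_evD]
  exact (condExp_restrict_ae_eq_restrict ((hD1.prodMk hΔ).prodMk hX).comap_le hF
    hS.integrableOn).trans (ae_restrict_of_ae (hMAR.condExp_selection_evD2 hX hD1 hD2 hΔ hS hd))

end Selection

theorem snd_mem_of_mem_allPaths {d : ℝ × ℝ} (hd : d ∈ allPaths) : d.2 ∈ ({0, 1} : Set ℝ) := by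
  rcases hd with rfl | rfl | rfl | rfl <;> simp

theorem statement_2_general
    [MeasurableSpace Ω] [m𝓧 : MeasurableSpace 𝓧]
    (P : Measure Ω) [IsFiniteMeasure P]
    (X : Ω → 𝓧) (hX : Measurable X)
    (Y0 Y2 D1 D2 S : Ω → ℝ)
    (hD1 : Measurable D1) (hD2 : Measurable D2) (hS : Measurable S)
    (hΔ : Measurable fun ω => Y2 ω - Y0 ω) (hΔi : Integrable (fun ω => Y2 ω - Y0 ω) P)
    (hSv : ∀ ω, S ω = 0 ∨ S ω = 1)
    (d : ℝ × ℝ) (hd : d.2 ∈ ({0, 1} : Set ℝ))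
    (q : ℝ → 𝓧 → ℝ) (hMAR : MAR P X D1 D2 S Y0 Y2 q)
    (md mdS : 𝓧 → ℝ)
    (hmd : IsCondMeanGiven P X (evD D1 D2 d) (fun ω => Y2 ω - Y0 ω) md)
    (hmdS : IsCondMeanGiven P X (evD D1 D2 d ∩ {ω | S ω = 1}) (fun ω => Y2 ω - Y0 ω) mdS) :
    ∀ᵐ ω ∂(P.restrict (evD D1 D2 d)), md (X ω) = mdS (X ω) := by
  have hT : MeasurableSet {ω | S ω = 1} := hS (measurableSet_singleton 1)
  have hA : MeasurableSet (evD D1 D2 d) :=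
    (hD1 (measurableSet_singleton d.1)).inter (hD2 (measurableSet_singleton d.2))
  have hS_ind : {ω | S ω = 1}.indicator 1 = S := by
    ext ω
    rcases hSv ω with h | h <;> simp [h]
  have hS_int : Integrable S P := hS_ind ▸ (integrable_const 1).indicator hT
  have hWXm := comap_measurable (m := inferInstance) fun ω => ((D1 ω, Y2 ω - Y0 ω), X ω)
  have hXm := comap_measurable (m := m𝓧) X
  have ignorable := hMAR.condExp_selection_evD hX hD1 hD2 hΔ hS_int hd
  have hq0 : ∀ᵐ ω ∂P.restrict (evD D1 D2 d), q d.2 (X ω) ≠ 0 :=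
    ae_restrict_of_ae ((hMAR.2.1 d.2 hd).mono fun _ h => h.1.ne')
  have selected := hmdS.ae_eq_condExp hX (hA.inter hT) hΔi.integrableOn
  rw [inter_comm, ← Measure.restrict_restrict hT] at selected
  have whole := hmd.ae_eq_condExp hX hA hΔi.integrableOn
  have whole_eq_selected := condExp_ae_eq_of_ignorable_selection hWXm.snd.comap_le
    ((hD1.prodMk hΔ).prodMk hX).comap_le hT hΔi.integrableOn hWXm.fst.snd.stronglyMeasurable
    ((hMAR.1 d.2 hd).1.comp hXm).stronglyMeasurable (by rwa [hS_ind]) hq0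
    (hmdS.1.comp hXm).stronglyMeasurable selected
  exact whole.trans whole_eq_selected

/-- Lemma 1.1: identification of the conditional outcome mean from the observed subsample. -/
theorem statement_2
    [MeasurableSpace Ω] [m𝓧 : MeasurableSpace 𝓧]
    (P : Measure Ω) [IsProbabilityMeasure P]
    (X : Ω → 𝓧) (hX : Measurable X)
    (Y0 Y2 D1 D2 S : Ω → ℝ)
    (hY0 : Measurable Y0) (hY2 : Measurable Y2)
    (hD1 : Measurable D1) (hD2 : Measurable D2) (hS : Measurable S)
    (hY0i : Integrable Y0 P) (hY2i : Integrable Y2 P)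
    (hD1v : ∀ ω, D1 ω = 0 ∨ D1 ω = 1) (hD2v : ∀ ω, D2 ω = 0 ∨ D2 ω = 1)
    (hSv : ∀ ω, S ω = 0 ∨ S ω = 1)
    (d : ℝ × ℝ) (hd : d ∈ allPaths)
    (q : ℝ → 𝓧 → ℝ) (hMAR : MAR P X D1 D2 S Y0 Y2 q)
    (hdS1 : 0 < P (evD D1 D2 d ∩ {ω | S ω = 1}))
    (pD2d : 𝓧 → ℝ)
    (hpD2d : IsCondMeanGiven P X Set.univ (ind (evD2 D2 d.2)) pD2d)
    (hpD2dpos : ∀ᵐ ω ∂P, 0 < pD2d (X ω))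
    (pc : 𝓧 → ℝ)
    (hpc : IsCondMeanGiven P X (evD2 D2 d.2) (ind {ω | D1 ω = d.1}) pc)
    (hpcpos : ∀ᵐ ω ∂(P.restrict (evD2 D2 d.2)), 0 < pc (X ω))
    (md mdS : 𝓧 → ℝ)
    (hmd : IsCondMeanGiven P X (evD D1 D2 d) (fun ω => Y2 ω - Y0 ω) md)
    (hmdS : IsCondMeanGiven P X (evD D1 D2 d ∩ {ω | S ω = 1}) (fun ω => Y2 ω - Y0 ω) mdS) :
    ∀ᵐ ω ∂(P.restrict (evD D1 D2 d)), md (X ω) = mdS (X ω) := by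
  exact statement_2_general P X hX Y0 Y2 D1 D2 S hD1 hD2 hS (hY2.sub hY0) (hY2i.sub hY0i) hSv
    d (snd_mem_of_mem_allPaths hd) q hMAR md mdS hmd hmdS

end DIDMissing
end
end

section
/- (Theorem 1, propensity-score and outcome models correct.) Fix d in {(1,1),(0,1),(1,0)} and d' = (0,0). Suppose Assumption DID holds for d and for d', Assumption MAR holds, P(D = d | X) > 0 and P(D = d' | X) > 0 a.s., all four Hájek-weight denominators are finite and strictly positive, and all expectations defining τ^R_{dd'} are finite. If, a.s., π_{d1|d2}(X) = p_{d1|d2}(X), π_{d2}(X) = p_{d2}(X), π_{0|0}(X) = p_{0|0}(X), π_0(X) = p_0(X) (so that π_d = p_d and π_{d'} = p_{d'}), and μ_d(X) = m_d(X), μ_{d'}(X) = m_{d'}(X), while φ_{d2} and φ_0 are arbitrary (0,1]-valued measurable functions of X, then τ^R_{dd'} = τ_{dd'}. -/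
open MeasureTheory Set
open scoped Classical

noncomputable section

namespace DIDMissing

variable {Ω : Type*} {𝓧 : Type*}

/-- Numerator of the Hájek weight `w₁`. -/
def n1 (X : Ω → 𝓧) (D1 D2 S : Ω → ℝ) (φ2 : 𝓧 → ℝ) (d : ℝ × ℝ) : Ω → ℝ :=
  fun ω => S ω / φ2 (X ω) * ind (evD D1 D2 d) ω

/-- Numerator of the Hájek weight `w₂`. -/
def n2 (X : Ω → 𝓧) (D1 D2 S : Ω → ℝ) (φ0 πc πc' π2 π0 : 𝓧 → ℝ) : Ω → ℝ :=
  fun ω => S ω / φ0 (X ω) * (πc (X ω) * π2 (X ω) / (πc' (X ω) * π0 (X ω)))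
    * ind (evD D1 D2 (0, 0)) ω

/-- Numerator of the Hájek weight `w₃`. -/
def n3 (X : Ω → 𝓧) (D2 : Ω → ℝ) (πc : 𝓧 → ℝ) (d2 : ℝ) : Ω → ℝ :=
  fun ω => πc (X ω) * ind (evD2 D2 d2) ω

/-- Numerator of the Hájek weight `w₄`. -/
def n4 (X : Ω → 𝓧) (D2 S : Ω → ℝ) (φ2 πc : 𝓧 → ℝ) (d2 : ℝ) : Ω → ℝ :=
  fun ω => S ω / φ2 (X ω) * πc (X ω) * ind (evD2 D2 d2) ω

/-- The robust estimand `τ^R_{d,(0,0)}`. -/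
def tauR [MeasurableSpace Ω] (P : Measure Ω) (X : Ω → 𝓧) (D1 D2 S Y0 Y2 : Ω → ℝ)
    (d : ℝ × ℝ) (μd μd' πc πc' π2 π0 φ2 φ0 : 𝓧 → ℝ) : ℝ :=
  (∫ ω, (n1 X D1 D2 S φ2 d ω / ∫ ω', n1 X D1 D2 S φ2 d ω' ∂P
        - n2 X D1 D2 S φ0 πc πc' π2 π0 ω / ∫ ω', n2 X D1 D2 S φ0 πc πc' π2 π0 ω' ∂P)
      * (Y2 ω - Y0 ω - μd' (X ω)) ∂P)
  + ∫ ω, (n3 X D2 πc d.2 ω / ∫ ω', n3 X D2 πc d.2 ω' ∂P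
        - n4 X D2 S φ2 πc d.2 ω / ∫ ω', n4 X D2 S φ2 πc d.2 ω' ∂P)
      * (μd (X ω) - μd' (X ω)) ∂P

/-
Condition everything on `σ(X)`, and write `A = {D = d}`, `B = {D₂ = d₂}`. By MAR,
`E[1_A S f(ΔY) ∣ X] = q(X) E[1_A f(ΔY) ∣ X]`, and likewise for `B`; since `π_{d₁|d₂}` is correct,
`1_A S` and `1_B S π_{d₁|d₂}(X)` have the same conditional mean. As `μ_d` is correct too, the `w₁`
term equals `E[1_B S π_{d₁|d₂} (μ_d - μ_{d'}) / φ]`, up to the common normalisation, whatever `φ`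
is: this is exactly the `w₄` term. The `w₂` term vanishes because `μ_{d'}` is correct, and the `w₃`
term is `E[ΔY - μ_{d'}(X) ∣ D = d]`. Parallel trends and no anticipation identify `μ_{d'}` with
the untreated trend, which turns this into the treatment effect.
-/

section ConditionalExpectation

variable {m m0 : MeasurableSpace Ω} {μ : Measure Ω} {U V W W' Z g k ψ : Ω → ℝ}

theorem integral_eq_of_condExp_ae_eq (hm : m ≤ m0) [SigmaFinite (μ.trim hm)]
    (hUV : μ[U | m] =ᵐ[μ] μ[V | m]) : ∫ ω, U ω ∂μ = ∫ ω, V ω ∂μ := by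
  rw [← integral_condExp hm, integral_congr_ae hUV, integral_condExp hm]

theorem integral_mul_eq_of_condExp_ae_eq (hm : m ≤ m0) [SigmaFinite (μ.trim hm)]
    (hU : Integrable U μ) (hV : Integrable V μ) (hUV : μ[U | m] =ᵐ[μ] μ[V | m])
    (hψ : StronglyMeasurable[m] ψ) (hUψ : Integrable (U * ψ) μ) (hVψ : Integrable (V * ψ) μ) :
    ∫ ω, U ω * ψ ω ∂μ = ∫ ω, V ω * ψ ω ∂μ := by
  refine integral_eq_of_condExp_ae_eq hm ?_
  calc μ[U * ψ | m] =ᵐ[μ] μ[U | m] * ψ := condExp_mul_of_stronglyMeasurable_right hψ hUψ hU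
    _ =ᵐ[μ] μ[V | m] * ψ := hUV.mul .rfl
    _ =ᵐ[μ] μ[V * ψ | m] := (condExp_mul_of_stronglyMeasurable_right hψ hVψ hV).symm

theorem condExp_mul_sub_ae_eq
    (hWZ : μ[W * Z | m] =ᵐ[μ] μ[W | m] * g) (hWW' : μ[W | m] =ᵐ[μ] μ[W' | m])
    (hg : StronglyMeasurable[m] g) (hk : StronglyMeasurable[m] k)
    (hW : Integrable W μ) (hW' : Integrable W' μ) (hWZi : Integrable (W * Z) μ)
    (hWk : Integrable (W * k) μ) (hW'gk : Integrable (W' * (g - k)) μ) :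
    μ[W * (Z - k) | m] =ᵐ[μ] μ[W' * (g - k) | m] :=
  calc μ[W * (Z - k) | m] = μ[W * Z - W * k | m] := by rw [mul_sub]
    _ =ᵐ[μ] μ[W * Z | m] - μ[W * k | m] := condExp_sub hWZi hWk m
    _ =ᵐ[μ] μ[W | m] * g - μ[W | m] * k :=
      hWZ.sub (condExp_mul_of_stronglyMeasurable_right hk hWk hW)
    _ = μ[W | m] * (g - k) := (mul_sub _ _ _).symm
    _ =ᵐ[μ] μ[W' | m] * (g - k) := hWW'.mul .rfl
    _ =ᵐ[μ] μ[W' * (g - k) | m] :=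
      (condExp_mul_of_stronglyMeasurable_right (hg.sub hk) hW'gk hW').symm

end ConditionalExpectation

section Integrability

variable [MeasurableSpace Ω] {μ : Measure Ω} {u v r w Z : Ω → ℝ} {a b : ℝ} {A : Set Ω}

theorem measurable_ind (hA : MeasurableSet A) : Measurable (ind A) :=
  measurable_const.indicator hA

omit [MeasurableSpace Ω] in
theorem abs_ind_le_one (A : Set Ω) (ω : Ω) : |ind A ω| ≤ 1 := by
  unfold ind Set.indicator
  split_ifs <;> simp

omit [MeasurableSpace Ω] in
theorem abs_mul_le_one (hu : ∀ ω, |u ω| ≤ 1) (hv : ∀ ω, |v ω| ≤ 1) (ω : Ω) :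
    |(u * v) ω| ≤ 1 := by
  rw [Pi.mul_apply, abs_mul]
  exact mul_le_one₀ (hu ω) (abs_nonneg _) (hv ω)

theorem integrable_of_abs_le_one [IsFiniteMeasure μ] (hw : Measurable w) (hw1 : ∀ ω, |w ω| ≤ 1) :
    Integrable w μ :=
  .of_bound hw.aestronglyMeasurable 1 (.of_forall hw1)

theorem integrable_mul_of_abs_le_one (hw : Measurable w) (hw1 : ∀ ω, |w ω| ≤ 1)
    (hZ : Integrable Z μ) : Integrable (w * Z) μ :=
  hZ.bdd_mul hw.aestronglyMeasurable (.of_forall hw1)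

theorem integrable_ind_mul (hA : MeasurableSet A) (hZ : Integrable Z μ) :
    Integrable (ind A * Z) μ :=
  integrable_mul_of_abs_le_one (measurable_ind hA) (abs_ind_le_one A) hZ

theorem setIntegral_eq_integral_mul_ind (hA : MeasurableSet A) (Z : Ω → ℝ) :
    ∫ ω in A, Z ω ∂μ = ∫ ω, Z ω * ind A ω ∂μ := by
  rw [← integral_indicator hA]
  refine integral_congr_ae (.of_forall fun ω => ?_)
  by_cases hω : ω ∈ A <;> simp [ind, hω]

theorem integrable_of_forall_setIntegral_abs_le [IsFiniteMeasure μ] {C : ℝ} (hu : Measurable u)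
    (hv : Measurable v) (huv : ∀ ω, |u ω| ≤ |v ω|)
    (hC : ∀ n : ℕ, ∫ ω in {ω | |v ω| ≤ n}, |u ω| ∂μ ≤ C) : Integrable u μ := by
  have hT (n : ℕ) : MeasurableSet {ω | |v ω| ≤ n} := measurableSet_le hv.abs measurable_const
  have hcover : AECover μ Filter.atTop fun n : ℕ => {ω | |v ω| ≤ n} :=
    { ae_eventually_mem := .of_forall fun ω => by
        obtain ⟨N, hN⟩ := exists_nat_ge |v ω|
        filter_upwards [Filter.eventually_ge_atTop N] with n hn
        exact hN.trans (Nat.cast_le.2 hn)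
      measurableSet := hT }
  refine hcover.integrable_of_integral_norm_bounded C (fun n => ?_) (.of_forall hC)
  exact .of_bound (measure_lt_top _ _) hu.aestronglyMeasurable n <|
    (ae_restrict_mem (hT n)).mono fun ω hω => (huv ω).trans hω

theorem integrable_ind_mul_mul (hA : MeasurableSet A) (hw : Measurable w) (hw1 : ∀ ω, |w ω| ≤ 1)
    (hZ : Integrable Z μ) : Integrable (ind A * w * Z) μ :=
  integrable_mul_of_abs_le_one ((measurable_ind hA).mul hw)
    (abs_mul_le_one (abs_ind_le_one A) hw1) hZ

theorem integrable_left_of_div_sub_div_mul (hA : MeasurableSet A) (ha : a ≠ 0)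
    (hu : ∀ ω ∉ A, u ω = 0) (hv : ∀ ω ∈ A, v ω = 0)
    (h : Integrable (fun ω => (u ω / a - v ω / b) * r ω) μ) :
    Integrable (u * r) μ := by
  refine ((integrable_ind_mul hA h).const_mul a).congr (.of_forall fun ω => ?_)
  by_cases hω : ω ∈ A
  · simp only [ind, Pi.mul_apply, Set.indicator_of_mem hω, hv ω hω]
    field_simp
    ring
  · simp [ind, hω, hu ω hω]

theorem integrable_right_of_div_sub_div_mul (hb : b ≠ 0) (hu : Integrable (u * r) μ)
    (h : Integrable (fun ω => (u ω / a - v ω / b) * r ω) μ) :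
    Integrable (v * r) μ := by
  refine (((hu.const_mul a⁻¹).sub h).const_mul b).congr (.of_forall fun ω => ?_)
  simp only [Pi.mul_apply, Pi.sub_apply]
  field_simp
  ring

theorem integral_div_sub_div_mul (hu : Integrable (u * r) μ) (hv : Integrable (v * r) μ) :
    ∫ ω, (u ω / a - v ω / b) * r ω ∂μ
      = a⁻¹ * ∫ ω, u ω * r ω ∂μ - b⁻¹ * ∫ ω, v ω * r ω ∂μ := by
  rw [← integral_const_mul, ← integral_const_mul,
    ← integral_sub (by exact hu.const_mul a⁻¹) (by exact hv.const_mul b⁻¹)]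
  exact integral_congr_ae (.of_forall fun ω => by ring)

end Integrability

section CondMean

variable [MeasurableSpace Ω] [m𝓧 : MeasurableSpace 𝓧] {P : Measure Ω} [IsFiniteMeasure P]
  {X : Ω → 𝓧} {A : Set Ω} {U V Z : Ω → ℝ} {g h : 𝓧 → ℝ}

omit [MeasurableSpace Ω] in
theorem stronglyMeasurable_comap_comp (X : Ω → 𝓧) (hg : Measurable g) :
    StronglyMeasurable[m𝓧.comap X] (g ∘ X) :=
  (hg.comp (comap_measurable X)).stronglyMeasurable

theorem condExp_comap_ae_eq_of_forall_integral_eq (hX : Measurable X)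
    (hU : Integrable U P) (hV : Integrable V P)
    (hUV : ∀ h : 𝓧 → ℝ, Measurable h → (∃ C, ∀ x, |h x| ≤ C) →
      ∫ ω, U ω * h (X ω) ∂P = ∫ ω, V ω * h (X ω) ∂P) :
    P[U | m𝓧.comap X] =ᵐ[P] P[V | m𝓧.comap X] := by
  refine ae_eq_condExp_of_forall_setIntegral_eq hX.comap_le hV
    (fun _ _ _ => integrable_condExp.integrableOn) ?_
    stronglyMeasurable_condExp.aestronglyMeasurable
  rintro _ ⟨T, hT, rfl⟩ -
  rw [setIntegral_condExp hX.comap_le hU ⟨T, hT, rfl⟩,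
    setIntegral_eq_integral_mul_ind (hX hT), setIntegral_eq_integral_mul_ind (hX hT)]
  exact hUV _ (measurable_ind hT) ⟨1, abs_ind_le_one T⟩

/- Testing against the sign of `g` truncated to `{|g| ≤ n}` bounds `E[1_A |g(X)| 1{|g(X)| ≤ n}]`
by `E|1_A Z|`, uniformly in `n`. -/
theorem IsCondMeanGiven.integrable_ind_mul_comp (hX : Measurable X) (hA : MeasurableSet A)
    (hZ : Integrable Z P) (hg : IsCondMeanGiven P X A Z g) :
    Integrable (ind A * g ∘ X) P := by
  obtain ⟨hgm, hgZ⟩ := hg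
  have mul_div_abs (x : ℝ) : x * (x / |x|) = |x| := by
    rw [← mul_div_assoc, ← abs_mul_abs_self, mul_self_div_self]
  have hT (n : ℕ) : MeasurableSet {x | |g x| ≤ n} := measurableSet_le hgm.abs measurable_const
  let s (n : ℕ) : 𝓧 → ℝ := ind {x | |g x| ≤ n} * fun x => g x / |g x|
  have hsm (n : ℕ) : Measurable (s n) := (measurable_ind (hT n)).mul (hgm.div hgm.abs)
  have hs1 (n : ℕ) : ∀ x, |s n x| ≤ 1 := abs_mul_le_one (abs_ind_le_one _) fun x => by
    rw [abs_div, abs_abs]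
    exact div_self_le_one _
  refine integrable_of_forall_setIntegral_abs_le (v := g ∘ X) (C := ∫ ω, |(ind A * Z) ω| ∂P)
    ((measurable_ind hA).mul (hgm.comp hX)) (hgm.comp hX) (fun ω => ?_) fun n => ?_
  · rw [Pi.mul_apply, abs_mul]
    exact mul_le_of_le_one_left (abs_nonneg _) (abs_ind_le_one A ω)
  · calc ∫ ω in {ω | |(g ∘ X) ω| ≤ n}, |(ind A * g ∘ X) ω| ∂P
        = ∫ ω, ind A ω * g (X ω) * s n (X ω) ∂P := by
          refine (setIntegral_eq_integral_mul_ind (hX (hT n)) _).trans <|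
            integral_congr_ae (.of_forall fun ω => ?_)
          by_cases hω : |g (X ω)| ≤ n <;> by_cases hωA : ω ∈ A <;>
            simp [s, ind, hω, hωA, mul_div_abs]
      _ = ∫ ω, ind A ω * Z ω * s n (X ω) ∂P := (hgZ _ (hsm n) ⟨1, hs1 n⟩).symm
      _ ≤ ∫ ω, |(ind A * Z) ω| ∂P :=
          (Real.le_norm_self _).trans <|
            norm_integral_le_of_norm_le (integrable_ind_mul hA hZ).norm <| .of_forall fun ω => by
              rw [norm_mul]
              exact mul_le_of_le_one_right (norm_nonneg _) (hs1 n (X ω))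

theorem IsCondMeanGiven.condExp_ind_mul (hX : Measurable X) (hA : MeasurableSet A)
    (hZ : Integrable Z P) (hg : IsCondMeanGiven P X A Z g) :
    P[ind A * Z | m𝓧.comap X] =ᵐ[P] P[ind A | m𝓧.comap X] * g ∘ X :=
  have hgi := hg.integrable_ind_mul_comp hX hA hZ
  (condExp_comap_ae_eq_of_forall_integral_eq hX (integrable_ind_mul hA hZ) hgi hg.2).trans
    (condExp_mul_of_stronglyMeasurable_right (stronglyMeasurable_comap_comp X hg.1) hgi
      (integrable_of_abs_le_one (measurable_ind hA) (abs_ind_le_one A)))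

theorem IsCondMeanGiven.condExp_of_univ (hX : Measurable X) (hZ : Integrable Z P)
    (hg : IsCondMeanGiven P X Set.univ Z g) : P[Z | m𝓧.comap X] =ᵐ[P] g ∘ X := by
  have hind : ind (Set.univ : Set Ω) = fun _ => 1 := Set.indicator_univ _
  have h := hg.condExp_ind_mul hX .univ hZ
  rw [hind, condExp_const hX.comap_le] at h
  simpa only [← Pi.one_def, one_mul] using h

end CondMean

section Observed

variable [MeasurableSpace Ω] [m𝓧 : MeasurableSpace 𝓧] {P : Measure Ω} [IsFiniteMeasure P]
  {X : Ω → 𝓧} {Y0 Y2 D1 D2 S : Ω → ℝ} {d : ℝ × ℝ} {b : ℝ} {q : ℝ → 𝓧 → ℝ} {πc μd : 𝓧 → ℝ}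

omit [MeasurableSpace Ω] in
theorem ind_evD (D1 D2 : Ω → ℝ) (d : ℝ × ℝ) :
    ind (evD D1 D2 d) = ind (evD2 D2 d.2) * ind {ω | D1 ω = d.1} := by
  ext ω
  by_cases h1 : D1 ω = d.1 <;> by_cases h2 : D2 ω = d.2 <;> simp [ind, evD, evD2, h1, h2]

omit [MeasurableSpace Ω] in
theorem disjoint_evD (D1 D2 : Ω → ℝ) {e : ℝ × ℝ} (hde : d ≠ e) :
    Disjoint (evD D1 D2 d) (evD D1 D2 e) :=
  Set.disjoint_left.2 fun _ hd he =>
    hde (Prod.ext (hd.1.symm.trans he.1) (hd.2.symm.trans he.2))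

theorem measurableSet_evD2 (hD2 : Measurable D2) (b : ℝ) : MeasurableSet (evD2 D2 b) :=
  hD2 (measurableSet_singleton b)

theorem measurableSet_evD (hD1 : Measurable D1) (hD2 : Measurable D2) (d : ℝ × ℝ) :
    MeasurableSet (evD D1 D2 d) :=
  (hD1 (measurableSet_singleton d.1)).inter (hD2 (measurableSet_singleton d.2))

theorem condExp_ind_evD (hX : Measurable X) (hD1 : Measurable D1) (hD2 : Measurable D2)
    (hπ : IsCondMeanGiven P X (evD2 D2 d.2) (ind {ω | D1 ω = d.1}) πc) :
    P[ind (evD D1 D2 d) | m𝓧.comap X] =ᵐ[P] P[ind (evD2 D2 d.2) | m𝓧.comap X] * πc ∘ X := by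
  rw [ind_evD]
  exact hπ.condExp_ind_mul hX (measurableSet_evD2 hD2 d.2) <|
    integrable_of_abs_le_one (measurable_ind (hD1 (measurableSet_singleton d.1)))
      (abs_ind_le_one _)

omit [IsFiniteMeasure P] in
theorem MAR.integrable_comp_mul (hMAR : MAR P X D1 D2 S Y0 Y2 q) (hX : Measurable X)
    (hb : b ∈ ({0, 1} : Set ℝ)) {Z : Ω → ℝ} (hZ : Integrable Z P) :
    Integrable (q b ∘ X * Z) P :=
  hZ.bdd_mul (c := 1) ((hMAR.1 b hb).1.comp hX).aestronglyMeasurable <|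
    (hMAR.2.1 b hb).mono fun ω hω => by
      rw [Function.comp_apply, Real.norm_of_nonneg hω.1.le]
      exact hω.2

/- For a fixed bounded `h`, MAR says that `1_B S h(X)` and `q(X) 1_B h(X)` have the same
conditional expectation given `(D₁, ΔY)`, which frees `f` from being bounded. -/
theorem MAR.integral_observed (hMAR : MAR P X D1 D2 S Y0 Y2 q) (hX : Measurable X)
    (hΔ : Measurable (Y2 - Y0)) (hD1 : Measurable D1) (hD2 : Measurable D2)
    (hS : Measurable S) (hS1 : ∀ ω, |S ω| ≤ 1) (hb : b ∈ ({0, 1} : Set ℝ))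
    {f : ℝ × ℝ → ℝ} (hf : Measurable f) (hfi : Integrable (fun ω => f (D1 ω, (Y2 - Y0) ω)) P)
    {h : 𝓧 → ℝ} (hh : Measurable h) (hhC : ∃ C, ∀ x, |h x| ≤ C) :
    ∫ ω, ind (evD2 D2 b) ω * S ω * f (D1 ω, (Y2 - Y0) ω) * h (X ω) ∂P
      = ∫ ω, q b (X ω) * (ind (evD2 D2 b) ω * f (D1 ω, (Y2 - Y0) ω)) * h (X ω) ∂P := by
  have hW : Measurable fun ω => (D1 ω, (Y2 - Y0) ω) := hD1.prodMk hΔ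
  have hSi {Z : Ω → ℝ} (hZ : Integrable Z P) : Integrable (ind (evD2 D2 b) * S * Z) P :=
    integrable_ind_mul_mul (measurableSet_evD2 hD2 b) hS hS1 hZ
  have hqi {Z : Ω → ℝ} (hZ : Integrable Z P) : Integrable (q b ∘ X * (ind (evD2 D2 b) * Z)) P :=
    hMAR.integrable_comp_mul hX hb (integrable_ind_mul (measurableSet_evD2 hD2 b) hZ)
  have hhi {Z : Ω → ℝ} (hZ : Integrable Z P) : Integrable (h ∘ X * Z) P :=
    hZ.bdd_mul (hh.comp hX).aestronglyMeasurable (.of_forall fun ω => hhC.choose_spec (X ω))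
  have hhX : Integrable (h ∘ X) P :=
    .of_bound (hh.comp hX).aestronglyMeasurable _ (.of_forall fun ω => hhC.choose_spec (X ω))
  have hcond := condExp_comap_ae_eq_of_forall_integral_eq hW (hSi hhX) (hqi hhX)
    fun k hk hkC => by
      convert hMAR.2.2 b hb k hk hkC h hh hhC using 3 with ω ω
      · exact mul_right_comm _ _ _
      · simp only [Pi.mul_apply, Function.comp_apply, Pi.sub_apply]
        ring
  convert integral_mul_eq_of_condExp_ae_eq hW.comap_le (hSi hhX) (hqi hhX) hcond
    (stronglyMeasurable_comap_comp _ hf) ?_ ?_ using 3 with ω ω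
  · exact mul_right_comm _ _ _
  · simp only [Pi.mul_apply, Function.comp_apply]
    ring
  · exact (hSi (hhi hfi)).congr (.of_forall fun ω => (mul_assoc _ _ _).symm)
  · refine (hqi (hhi hfi)).congr (.of_forall fun ω => ?_)
    simp only [Pi.mul_apply, Function.comp_apply]
    ring

theorem MAR.condExp_observed (hMAR : MAR P X D1 D2 S Y0 Y2 q) (hX : Measurable X)
    (hΔ : Measurable (Y2 - Y0)) (hD1 : Measurable D1) (hD2 : Measurable D2)
    (hS : Measurable S) (hS1 : ∀ ω, |S ω| ≤ 1) (hb : b ∈ ({0, 1} : Set ℝ))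
    {f : ℝ × ℝ → ℝ} (hf : Measurable f) (hfi : Integrable (fun ω => f (D1 ω, (Y2 - Y0) ω)) P) :
    P[ind (evD2 D2 b) * S * (fun ω => f (D1 ω, (Y2 - Y0) ω)) | m𝓧.comap X]
      =ᵐ[P] q b ∘ X * P[ind (evD2 D2 b) * (fun ω => f (D1 ω, (Y2 - Y0) ω)) | m𝓧.comap X] :=
  have hBi := integrable_ind_mul (measurableSet_evD2 hD2 b) hfi
  have hqi := hMAR.integrable_comp_mul hX hb hBi
  (condExp_comap_ae_eq_of_forall_integral_eq hX
      (integrable_ind_mul_mul (measurableSet_evD2 hD2 b) hS hS1 hfi) hqi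
      fun _ => hMAR.integral_observed hX hΔ hD1 hD2 hS hS1 hb hf hfi).trans
  (condExp_mul_of_stronglyMeasurable_left (stronglyMeasurable_comap_comp X (hMAR.1 b hb).1)
    hqi hBi)

theorem MAR.condExp_ind_evD2_observed (hMAR : MAR P X D1 D2 S Y0 Y2 q) (hX : Measurable X)
    (hΔ : Measurable (Y2 - Y0)) (hD1 : Measurable D1) (hD2 : Measurable D2)
    (hS : Measurable S) (hS1 : ∀ ω, |S ω| ≤ 1) (hb : b ∈ ({0, 1} : Set ℝ)) :
    P[ind (evD2 D2 b) * S | m𝓧.comap X]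
      =ᵐ[P] q b ∘ X * P[ind (evD2 D2 b) | m𝓧.comap X] := by
  have h := hMAR.condExp_observed hX hΔ hD1 hD2 hS hS1 hb (f := fun _ => 1)
    measurable_const (integrable_const 1)
  simpa only [← Pi.one_def, mul_one] using h

theorem MAR.condExp_ind_evD_observed_comp (hMAR : MAR P X D1 D2 S Y0 Y2 q) (hX : Measurable X)
    (hΔ : Measurable (Y2 - Y0)) (hD1 : Measurable D1) (hD2 : Measurable D2)
    (hS : Measurable S) (hS1 : ∀ ω, |S ω| ≤ 1) (hd : d.2 ∈ ({0, 1} : Set ℝ))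
    {k : ℝ → ℝ} (hk : Measurable k) (hki : Integrable (k ∘ (Y2 - Y0)) P) :
    P[ind (evD D1 D2 d) * S * k ∘ (Y2 - Y0) | m𝓧.comap X]
      =ᵐ[P] q d.2 ∘ X * P[ind (evD D1 D2 d) * k ∘ (Y2 - Y0) | m𝓧.comap X] := by
  have h := hMAR.condExp_observed hX hΔ hD1 hD2 hS hS1 hd
    (f := fun p => ind {d.1} p.1 * k p.2)
    (((measurable_ind (measurableSet_singleton d.1)).comp measurable_fst).mul
      (hk.comp measurable_snd))
    (integrable_ind_mul (hD1 (measurableSet_singleton d.1)) hki)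
  convert h using 2
  · rw [ind_evD, mul_right_comm _ _ S, mul_assoc]
    rfl
  · rw [ind_evD, mul_assoc]
    rfl

theorem MAR.condExp_ind_evD_observed (hMAR : MAR P X D1 D2 S Y0 Y2 q) (hX : Measurable X)
    (hΔ : Measurable (Y2 - Y0)) (hD1 : Measurable D1) (hD2 : Measurable D2)
    (hS : Measurable S) (hS1 : ∀ ω, |S ω| ≤ 1) (hd : d.2 ∈ ({0, 1} : Set ℝ)) :
    P[ind (evD D1 D2 d) * S | m𝓧.comap X]
      =ᵐ[P] q d.2 ∘ X * P[ind (evD D1 D2 d) | m𝓧.comap X] := by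
  have h := hMAR.condExp_ind_evD_observed_comp hX hΔ hD1 hD2 hS hS1 hd (k := fun _ => 1)
    measurable_const (integrable_const 1)
  have hone : (fun _ : ℝ => (1 : ℝ)) ∘ (Y2 - Y0) = 1 := rfl
  simpa only [hone, mul_one] using h

theorem MAR.condExp_ind_evD_observed_mul_trend (hMAR : MAR P X D1 D2 S Y0 Y2 q) (hX : Measurable X)
    (hΔ : Measurable (Y2 - Y0)) (hD1 : Measurable D1) (hD2 : Measurable D2)
    (hS : Measurable S) (hS1 : ∀ ω, |S ω| ≤ 1) (hd : d.2 ∈ ({0, 1} : Set ℝ))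
    (hΔi : Integrable (Y2 - Y0) P)
    (hμ : IsCondMeanGiven P X (evD D1 D2 d) (Y2 - Y0) μd) :
    P[ind (evD D1 D2 d) * S * (Y2 - Y0) | m𝓧.comap X]
      =ᵐ[P] P[ind (evD D1 D2 d) * S | m𝓧.comap X] * μd ∘ X :=
  calc P[ind (evD D1 D2 d) * S * (Y2 - Y0) | m𝓧.comap X]
      =ᵐ[P] q d.2 ∘ X * P[ind (evD D1 D2 d) * (Y2 - Y0) | m𝓧.comap X] :=
        hMAR.condExp_ind_evD_observed_comp hX hΔ hD1 hD2 hS hS1 hd measurable_id hΔi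
    _ =ᵐ[P] q d.2 ∘ X * (P[ind (evD D1 D2 d) | m𝓧.comap X] * μd ∘ X) :=
        .mul .rfl (hμ.condExp_ind_mul hX (measurableSet_evD hD1 hD2 d) hΔi)
    _ = q d.2 ∘ X * P[ind (evD D1 D2 d) | m𝓧.comap X] * μd ∘ X := (mul_assoc _ _ _).symm
    _ =ᵐ[P] P[ind (evD D1 D2 d) * S | m𝓧.comap X] * μd ∘ X :=
        (hMAR.condExp_ind_evD_observed hX hΔ hD1 hD2 hS hS1 hd).symm.mul .rfl

theorem MAR.condExp_ind_evD_observed_eq (hMAR : MAR P X D1 D2 S Y0 Y2 q)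
    (hX : Measurable X) (hΔ : Measurable (Y2 - Y0)) (hD1 : Measurable D1)
    (hD2 : Measurable D2) (hS : Measurable S) (hS1 : ∀ ω, |S ω| ≤ 1)
    (hd : d.2 ∈ ({0, 1} : Set ℝ))
    (hπ : IsCondMeanGiven P X (evD2 D2 d.2) (ind {ω | D1 ω = d.1}) πc)
    (hπi : Integrable (ind (evD2 D2 d.2) * S * πc ∘ X) P) :
    P[ind (evD D1 D2 d) * S | m𝓧.comap X]
      =ᵐ[P] P[ind (evD2 D2 d.2) * S * πc ∘ X | m𝓧.comap X] := by
  have hS2 := hMAR.condExp_ind_evD2_observed hX hΔ hD1 hD2 hS hS1 hd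
  have hSi : Integrable (ind (evD2 D2 d.2) * S) P :=
    integrable_ind_mul (measurableSet_evD2 hD2 d.2) (integrable_of_abs_le_one hS hS1)
  calc P[ind (evD D1 D2 d) * S | m𝓧.comap X]
      =ᵐ[P] q d.2 ∘ X * P[ind (evD D1 D2 d) | m𝓧.comap X] :=
        hMAR.condExp_ind_evD_observed hX hΔ hD1 hD2 hS hS1 hd
    _ =ᵐ[P] q d.2 ∘ X * (P[ind (evD2 D2 d.2) | m𝓧.comap X] * πc ∘ X) :=
        .mul .rfl (condExp_ind_evD hX hD1 hD2 hπ)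
    _ = q d.2 ∘ X * P[ind (evD2 D2 d.2) | m𝓧.comap X] * πc ∘ X := (mul_assoc _ _ _).symm
    _ =ᵐ[P] P[ind (evD2 D2 d.2) * S | m𝓧.comap X] * πc ∘ X := hS2.symm.mul .rfl
    _ =ᵐ[P] P[ind (evD2 D2 d.2) * S * πc ∘ X | m𝓧.comap X] :=
        (condExp_mul_of_stronglyMeasurable_right (stronglyMeasurable_comap_comp X hπ.1)
          hπi hSi).symm

end Observed

section ParallelTrends

variable [MeasurableSpace Ω] [m𝓧 : MeasurableSpace 𝓧] {P : Measure Ω} [IsFiniteMeasure P]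
  {X : Ω → 𝓧} {Y0 Y2 D1 D2 : Ω → ℝ} {Y0p Y2p : ℝ × ℝ → Ω → ℝ} {d : ℝ × ℝ} {μd' pd' : 𝓧 → ℝ}

theorem DID.condExp_ind_mul (hDID : DID P X D1 D2 Y0p Y2p d) (hX : Measurable X)
    (hD1 : Measurable D1) (hD2 : Measurable D2) (hTi : Integrable (Y2p (0, 0) - Y0p (0, 0)) P) :
    P[ind (evD D1 D2 d) * (Y2p (0, 0) - Y0p (0, 0)) | m𝓧.comap X]
      =ᵐ[P] P[ind (evD D1 D2 d) | m𝓧.comap X] * P[Y2p (0, 0) - Y0p (0, 0) | m𝓧.comap X] := by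
  obtain ⟨-, tr, htr, htrd⟩ := hDID
  exact (htrd.condExp_ind_mul hX (measurableSet_evD hD1 hD2 d) hTi).trans
    (.mul .rfl (htr.condExp_of_univ hX hTi).symm)

omit [MeasurableSpace Ω] in
theorem ind_evD_mul_sub_eq (hcons0 : ∀ ω, Y0 ω = Y0p (D1 ω, D2 ω) ω)
    (hcons2 : ∀ ω, Y2 ω = Y2p (D1 ω, D2 ω) ω) (d : ℝ × ℝ) :
    ind (evD D1 D2 d) * (Y2 - Y0) = ind (evD D1 D2 d) * (Y2p d - Y0p d) := by
  ext ω
  by_cases hω : ω ∈ evD D1 D2 d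
  · simp [hcons0, hcons2, hω.1, hω.2]
  · simp [ind, hω]

theorem DID.condExp_untreated_trend (hDID : DID P X D1 D2 Y0p Y2p (0, 0)) (hX : Measurable X)
    (hD1 : Measurable D1) (hD2 : Measurable D2) (hTi : Integrable (Y2p (0, 0) - Y0p (0, 0)) P)
    (hΔi : Integrable (Y2 - Y0) P)
    (hcons0 : ∀ ω, Y0 ω = Y0p (D1 ω, D2 ω) ω) (hcons2 : ∀ ω, Y2 ω = Y2p (D1 ω, D2 ω) ω)
    (hpd' : IsCondMeanGiven P X Set.univ (ind (evD D1 D2 (0, 0))) pd')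
    (hpd'pos : ∀ᵐ ω ∂P, 0 < pd' (X ω))
    (hμd' : IsCondMeanGiven P X (evD D1 D2 (0, 0)) (Y2 - Y0) μd') :
    P[Y2p (0, 0) - Y0p (0, 0) | m𝓧.comap X] =ᵐ[P] μd' ∘ X := by
  have hA := measurableSet_evD hD1 hD2 (0, 0)
  have hp := hpd'.condExp_of_univ hX
    (integrable_of_abs_le_one (measurable_ind hA) (abs_ind_le_one _))
  have hμ := hμd'.condExp_ind_mul hX hA hΔi
  rw [ind_evD_mul_sub_eq hcons0 hcons2] at hμ
  filter_upwards [hDID.condExp_ind_mul hX hD1 hD2 hTi, hμ, hp, hpd'pos] with ω hT hμ hp hpos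
  refine mul_left_cancel₀ (a := (P[ind (evD D1 D2 (0, 0)) | m𝓧.comap X]) ω) ?_ (hT.symm.trans hμ)
  rw [hp]
  exact hpos.ne'

theorem DID.integral_ind_mul_trend_eq (hDID : DID P X D1 D2 Y0p Y2p d) (hX : Measurable X)
    (hD1 : Measurable D1) (hD2 : Measurable D2) (hTi : Integrable (Y2p (0, 0) - Y0p (0, 0)) P)
    (hμd'm : Measurable μd') (hμd'i : Integrable (μd' ∘ X) P)
    (htrend : P[Y2p (0, 0) - Y0p (0, 0) | m𝓧.comap X] =ᵐ[P] μd' ∘ X) :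
    ∫ ω, (ind (evD D1 D2 d) * (Y2p (0, 0) - Y0p (0, 0))) ω ∂P
      = ∫ ω, (ind (evD D1 D2 d) * μd' ∘ X) ω ∂P := by
  have hA := measurableSet_evD hD1 hD2 d
  refine integral_eq_of_condExp_ae_eq hX.comap_le ?_
  calc P[ind (evD D1 D2 d) * (Y2p (0, 0) - Y0p (0, 0)) | m𝓧.comap X]
      =ᵐ[P] P[ind (evD D1 D2 d) | m𝓧.comap X] * P[Y2p (0, 0) - Y0p (0, 0) | m𝓧.comap X] :=
        hDID.condExp_ind_mul hX hD1 hD2 hTi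
    _ =ᵐ[P] P[ind (evD D1 D2 d) | m𝓧.comap X] * μd' ∘ X := .mul .rfl htrend
    _ =ᵐ[P] P[ind (evD D1 D2 d) * μd' ∘ X | m𝓧.comap X] :=
        (condExp_mul_of_stronglyMeasurable_right (stronglyMeasurable_comap_comp X hμd'm)
          (integrable_ind_mul hA hμd'i)
          (integrable_of_abs_le_one (measurable_ind hA) (abs_ind_le_one _))).symm

theorem DID.setIntegral_treatmentEffect_eq (hDID : DID P X D1 D2 Y0p Y2p d) (hX : Measurable X)
    (hD1 : Measurable D1) (hD2 : Measurable D2) (hY0d : Integrable (Y0p d) P)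
    (hY2d : Integrable (Y2p d) P) (hTi : Integrable (Y2p (0, 0) - Y0p (0, 0)) P)
    (hY00 : Integrable (Y0p (0, 0)) P)
    (hcons0 : ∀ ω, Y0 ω = Y0p (D1 ω, D2 ω) ω) (hcons2 : ∀ ω, Y2 ω = Y2p (D1 ω, D2 ω) ω)
    (hμd'm : Measurable μd') (hμd'i : Integrable (μd' ∘ X) P)
    (htrend : P[Y2p (0, 0) - Y0p (0, 0) | m𝓧.comap X] =ᵐ[P] μd' ∘ X) :
    ∫ ω in evD D1 D2 d, (Y2p d ω - Y2p (0, 0) ω) ∂P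
      = ∫ ω, ind (evD D1 D2 d) ω * ((Y2 - Y0) ω - μd' (X ω)) ∂P := by
  have hA := measurableSet_evD hD1 hD2 d
  set A := evD D1 D2 d
  have hanticip : ∫ ω, (ind A * Y0p (0, 0)) ω ∂P = ∫ ω, (ind A * Y0p d) ω ∂P := by
    simpa using (hDID.1 (fun _ => 1) measurable_const ⟨1, by simp⟩).symm
  have hmean := hDID.integral_ind_mul_trend_eq hX hD1 hD2 hTi hμd'm hμd'i htrend
  calc ∫ ω in A, (Y2p d ω - Y2p (0, 0) ω) ∂P
      = ∫ ω, ((ind A * Y2p d) ω - (ind A * Y0p (0, 0)) ω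
          - (ind A * (Y2p (0, 0) - Y0p (0, 0))) ω) ∂P := by
        rw [setIntegral_eq_integral_mul_ind hA]
        refine integral_congr_ae (.of_forall fun ω => ?_)
        simp only [Pi.mul_apply, Pi.sub_apply]
        ring
    _ = ∫ ω, ((ind A * Y2p d) ω - (ind A * Y0p d) ω - (ind A * μd' ∘ X) ω) ∂P := by
        have hi {Z : Ω → ℝ} (hZ : Integrable Z P) := integrable_ind_mul hA hZ
        have integral_sub_sub {U V W : Ω → ℝ} (hU : Integrable U P) (hV : Integrable V P)
            (hW : Integrable W P) : ∫ ω, (U ω - V ω - W ω) ∂P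
              = ∫ ω, U ω ∂P - ∫ ω, V ω ∂P - ∫ ω, W ω ∂P := by
          rw [integral_sub (by exact hU.sub hV) hW, integral_sub hU hV]
        rw [integral_sub_sub (hi hY2d) (hi hY00) (hi hTi),
          integral_sub_sub (hi hY2d) (hi hY0d) (hi hμd'i), hanticip, hmean]
    _ = ∫ ω, ind A ω * ((Y2 - Y0) ω - μd' (X ω)) ∂P := by
        refine integral_congr_ae (.of_forall fun ω => ?_)
        have h := congrFun (ind_evD_mul_sub_eq hcons0 hcons2 d) ω
        simp only [Pi.mul_apply, Pi.sub_apply, Function.comp_apply] at h ⊢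
        linear_combination -h

end ParallelTrends

section HajekWeights

theorem n1_eq_ind_mul (X : Ω → 𝓧) (D1 D2 S : Ω → ℝ) (φ2 : 𝓧 → ℝ) (d : ℝ × ℝ) :
    n1 X D1 D2 S φ2 d = ind (evD D1 D2 d) * S * φ2⁻¹ ∘ X := by
  ext ω
  simp only [n1, Pi.mul_apply, Function.comp_apply, Pi.inv_apply]
  ring

theorem n2_eq_ind_mul (X : Ω → 𝓧) (D1 D2 S : Ω → ℝ) (φ0 πc πc' π2 π0 : 𝓧 → ℝ) :
    n2 X D1 D2 S φ0 πc πc' π2 π0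
      = ind (evD D1 D2 (0, 0)) * S * (φ0⁻¹ * (πc * π2 / (πc' * π0))) ∘ X := by
  ext ω
  simp only [n2, Pi.mul_apply, Function.comp_apply, Pi.inv_apply, Pi.div_apply]
  ring

theorem n3_eq_ind_mul (X : Ω → 𝓧) (D2 : Ω → ℝ) (πc : 𝓧 → ℝ) (b : ℝ) :
    n3 X D2 πc b = ind (evD2 D2 b) * πc ∘ X :=
  mul_comm _ _

theorem n4_eq_ind_mul (X : Ω → 𝓧) (D2 S : Ω → ℝ) (φ2 πc : 𝓧 → ℝ) (b : ℝ) :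
    n4 X D2 S φ2 πc b = ind (evD2 D2 b) * S * πc ∘ X * φ2⁻¹ ∘ X := by
  ext ω
  simp only [n4, Pi.mul_apply, Function.comp_apply, Pi.inv_apply]
  ring

variable [MeasurableSpace Ω] [m𝓧 : MeasurableSpace 𝓧] {P : Measure Ω} [IsFiniteMeasure P]
  {X : Ω → 𝓧} {Y0 Y2 D1 D2 S : Ω → ℝ} {d : ℝ × ℝ} {q : ℝ → 𝓧 → ℝ}
  {μd μd' πc πc' π2 π0 φ2 φ0 : 𝓧 → ℝ}

omit [IsFiniteMeasure P] in
theorem integrable_n3_mul (hX : Measurable X) (hD2 : Measurable D2) (hπm : Measurable πc)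
    (hπ1 : ∀ x, |πc x| ≤ 1) {Z : Ω → ℝ} (hZ : Integrable Z P) (b : ℝ) :
    Integrable (n3 X D2 πc b * Z) P :=
  n3_eq_ind_mul X D2 πc b ▸ integrable_ind_mul_mul (measurableSet_evD2 hD2 b) (hπm.comp hX)
    (fun ω => hπ1 (X ω)) hZ

theorem condExp_ind_evD_eq_condExp_n3 (hX : Measurable X) (hD1 : Measurable D1)
    (hD2 : Measurable D2) (hπ : IsCondMeanGiven P X (evD2 D2 d.2) (ind {ω | D1 ω = d.1}) πc)
    (hπ1 : ∀ x, |πc x| ≤ 1) :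
    P[ind (evD D1 D2 d) | m𝓧.comap X] =ᵐ[P] P[n3 X D2 πc d.2 | m𝓧.comap X] := by
  have hB := measurable_ind (measurableSet_evD2 hD2 d.2)
  rw [n3_eq_ind_mul]
  exact (condExp_ind_evD hX hD1 hD2 hπ).trans
    (condExp_mul_of_stronglyMeasurable_right (stronglyMeasurable_comap_comp X hπ.1)
      (integrable_of_abs_le_one (hB.mul (hπ.1.comp hX))
        (abs_mul_le_one (abs_ind_le_one _) fun ω => hπ1 (X ω)))
      (integrable_of_abs_le_one hB (abs_ind_le_one _))).symm

theorem integral_n3 (hX : Measurable X) (hD1 : Measurable D1) (hD2 : Measurable D2)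
    (hπ : IsCondMeanGiven P X (evD2 D2 d.2) (ind {ω | D1 ω = d.1}) πc)
    (hπ1 : ∀ x, |πc x| ≤ 1) :
    ∫ ω, n3 X D2 πc d.2 ω ∂P = (P (evD D1 D2 d)).toReal := by
  rw [← integral_eq_of_condExp_ae_eq hX.comap_le (condExp_ind_evD_eq_condExp_n3 hX hD1 hD2 hπ hπ1)]
  exact integral_indicator_one (measurableSet_evD hD1 hD2 d)

theorem integral_n3_mul_sub (hX : Measurable X) (hD1 : Measurable D1) (hD2 : Measurable D2)
    (hΔi : Integrable (Y2 - Y0) P)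
    (hπ : IsCondMeanGiven P X (evD2 D2 d.2) (ind {ω | D1 ω = d.1}) πc)
    (hπ1 : ∀ x, |πc x| ≤ 1) (hμd : IsCondMeanGiven P X (evD D1 D2 d) (Y2 - Y0) μd)
    (hμdi : Integrable (μd ∘ X) P) (hμd'm : Measurable μd') (hμd'i : Integrable (μd' ∘ X) P) :
    ∫ ω, n3 X D2 πc d.2 ω * (μd (X ω) - μd' (X ω)) ∂P
      = ∫ ω, ind (evD D1 D2 d) ω * ((Y2 - Y0) ω - μd' (X ω)) ∂P := by
  have hA := measurableSet_evD hD1 hD2 d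
  have hn3 {Z : Ω → ℝ} (hZ : Integrable Z P) := integrable_n3_mul hX hD2 hπ.1 hπ1 hZ d.2
  refine (integral_eq_of_condExp_ae_eq hX.comap_le <| condExp_mul_sub_ae_eq
    (hμd.condExp_ind_mul hX hA hΔi) (condExp_ind_evD_eq_condExp_n3 hX hD1 hD2 hπ hπ1)
    (stronglyMeasurable_comap_comp X hμd.1) (stronglyMeasurable_comap_comp X hμd'm)
    (integrable_of_abs_le_one (measurable_ind hA) (abs_ind_le_one _)) ?_
    (integrable_ind_mul hA hΔi) (integrable_ind_mul hA hμd'i) (hn3 (hμdi.sub hμd'i))).symm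
  simpa only [mul_one] using hn3 (Z := 1) (integrable_const 1)

omit m𝓧 [IsFiniteMeasure P] in
theorem tauR_eq (hn1R : Integrable (n1 X D1 D2 S φ2 d * (Y2 - Y0 - μd' ∘ X)) P)
    (hn2R : Integrable (n2 X D1 D2 S φ0 πc πc' π2 π0 * (Y2 - Y0 - μd' ∘ X)) P)
    (hn3G : Integrable (n3 X D2 πc d.2 * (μd ∘ X - μd' ∘ X)) P)
    (hn4G : Integrable (n4 X D2 S φ2 πc d.2 * (μd ∘ X - μd' ∘ X)) P) :
    tauR P X D1 D2 S Y0 Y2 d μd μd' πc πc' π2 π0 φ2 φ0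
      = (∫ ω, n1 X D1 D2 S φ2 d ω ∂P)⁻¹
            * ∫ ω, n1 X D1 D2 S φ2 d ω * (Y2 ω - Y0 ω - μd' (X ω)) ∂P
        - (∫ ω, n2 X D1 D2 S φ0 πc πc' π2 π0 ω ∂P)⁻¹
            * ∫ ω, n2 X D1 D2 S φ0 πc πc' π2 π0 ω * (Y2 ω - Y0 ω - μd' (X ω)) ∂P
        + ((∫ ω, n3 X D2 πc d.2 ω ∂P)⁻¹
            * ∫ ω, n3 X D2 πc d.2 ω * (μd (X ω) - μd' (X ω)) ∂P
          - (∫ ω, n4 X D2 S φ2 πc d.2 ω ∂P)⁻¹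
            * ∫ ω, n4 X D2 S φ2 πc d.2 ω * (μd (X ω) - μd' (X ω)) ∂P) :=
  congrArg₂ (· + ·) (integral_div_sub_div_mul hn1R hn2R) (integral_div_sub_div_mul hn3G hn4G)

theorem MAR.integral_n1_eq_integral_n4 (hMAR : MAR P X D1 D2 S Y0 Y2 q) (hX : Measurable X)
    (hΔ : Measurable (Y2 - Y0)) (hD1 : Measurable D1) (hD2 : Measurable D2)
    (hS : Measurable S) (hS1 : ∀ ω, |S ω| ≤ 1) (hd : d.2 ∈ ({0, 1} : Set ℝ))
    (hπ : IsCondMeanGiven P X (evD2 D2 d.2) (ind {ω | D1 ω = d.1}) πc)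
    (hπ1 : ∀ x, |πc x| ≤ 1) (hφ2m : Measurable φ2)
    (hn1i : Integrable (n1 X D1 D2 S φ2 d) P) (hn4i : Integrable (n4 X D2 S φ2 πc d.2) P) :
    ∫ ω, n1 X D1 D2 S φ2 d ω ∂P = ∫ ω, n4 X D2 S φ2 πc d.2 ω ∂P := by
  have hπX : Integrable (πc ∘ X) P :=
    integrable_of_abs_le_one (hπ.1.comp hX) fun ω => hπ1 (X ω)
  have hπi := integrable_ind_mul_mul (measurableSet_evD2 hD2 d.2) hS hS1 hπX
  rw [n1_eq_ind_mul] at hn1i ⊢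
  rw [n4_eq_ind_mul] at hn4i ⊢
  exact integral_mul_eq_of_condExp_ae_eq hX.comap_le
    (integrable_ind_mul (measurableSet_evD hD1 hD2 d) (integrable_of_abs_le_one hS hS1)) hπi
    (hMAR.condExp_ind_evD_observed_eq hX hΔ hD1 hD2 hS hS1 hd hπ hπi)
    (stronglyMeasurable_comap_comp X hφ2m.inv) hn1i hn4i

theorem MAR.integral_n1_mul_sub (hMAR : MAR P X D1 D2 S Y0 Y2 q) (hX : Measurable X)
    (hΔ : Measurable (Y2 - Y0)) (hD1 : Measurable D1) (hD2 : Measurable D2)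
    (hS : Measurable S) (hS1 : ∀ ω, |S ω| ≤ 1) (hd : d.2 ∈ ({0, 1} : Set ℝ))
    (hΔi : Integrable (Y2 - Y0) P)
    (hπ : IsCondMeanGiven P X (evD2 D2 d.2) (ind {ω | D1 ω = d.1}) πc)
    (hπ1 : ∀ x, |πc x| ≤ 1) (hμd : IsCondMeanGiven P X (evD D1 D2 d) (Y2 - Y0) μd)
    (hμdi : Integrable (μd ∘ X) P) (hμd'm : Measurable μd') (hμd'i : Integrable (μd' ∘ X) P)
    (hφ2m : Measurable φ2) (hn1R : Integrable (n1 X D1 D2 S φ2 d * (Y2 - Y0 - μd' ∘ X)) P)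
    (hn4G : Integrable (n4 X D2 S φ2 πc d.2 * (μd ∘ X - μd' ∘ X)) P) :
    ∫ ω, n1 X D1 D2 S φ2 d ω * (Y2 ω - Y0 ω - μd' (X ω)) ∂P
      = ∫ ω, n4 X D2 S φ2 πc d.2 ω * (μd (X ω) - μd' (X ω)) ∂P := by
  have hA := measurableSet_evD hD1 hD2 d
  have hWi {Z : Ω → ℝ} (hZ : Integrable Z P) : Integrable (ind (evD D1 D2 d) * S * Z) P :=
    integrable_ind_mul_mul hA hS hS1 hZ
  have hπi {Z : Ω → ℝ} (hZ : Integrable Z P) :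
      Integrable (ind (evD2 D2 d.2) * S * πc ∘ X * Z) P := mul_assoc _ (πc ∘ X) Z ▸
    integrable_ind_mul_mul (measurableSet_evD2 hD2 d.2) hS hS1
      (integrable_mul_of_abs_le_one (hπ.1.comp hX) (fun ω => hπ1 (X ω)) hZ)
  have hW := integrable_ind_mul hA (integrable_of_abs_le_one (μ := P) hS hS1)
  have hW' := mul_one (ind (evD2 D2 d.2) * S * πc ∘ X) ▸ hπi (Z := 1) (integrable_const 1)
  have hcond := condExp_mul_sub_ae_eq
    (hMAR.condExp_ind_evD_observed_mul_trend hX hΔ hD1 hD2 hS hS1 hd hΔi hμd)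
    (hMAR.condExp_ind_evD_observed_eq hX hΔ hD1 hD2 hS hS1 hd hπ hW')
    (stronglyMeasurable_comap_comp X hμd.1) (stronglyMeasurable_comap_comp X hμd'm)
    hW hW' (hWi hΔi) (hWi hμd'i) (hπi (hμdi.sub hμd'i))
  rw [n1_eq_ind_mul, mul_right_comm] at hn1R
  rw [n4_eq_ind_mul, mul_right_comm] at hn4G
  convert integral_mul_eq_of_condExp_ae_eq hX.comap_le (hWi (hΔi.sub hμd'i))
    (hπi (hμdi.sub hμd'i)) hcond (stronglyMeasurable_comap_comp X hφ2m.inv) hn1R hn4G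
    using 3 with ω ω
  · rw [n1_eq_ind_mul]
    exact mul_right_comm _ _ _
  · rw [n4_eq_ind_mul]
    exact mul_right_comm _ _ _

theorem MAR.integral_n2_mul_sub (hMAR : MAR P X D1 D2 S Y0 Y2 q) (hX : Measurable X)
    (hΔ : Measurable (Y2 - Y0)) (hD1 : Measurable D1) (hD2 : Measurable D2)
    (hS : Measurable S) (hS1 : ∀ ω, |S ω| ≤ 1) (hΔi : Integrable (Y2 - Y0) P)
    (hμd' : IsCondMeanGiven P X (evD D1 D2 (0, 0)) (Y2 - Y0) μd')
    (hμd'i : Integrable (μd' ∘ X) P) (hπcm : Measurable πc) (hπc'm : Measurable πc')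
    (hπ2m : Measurable π2) (hπ0m : Measurable π0) (hφ0m : Measurable φ0)
    (hn2R : Integrable (n2 X D1 D2 S φ0 πc πc' π2 π0 * (Y2 - Y0 - μd' ∘ X)) P) :
    ∫ ω, n2 X D1 D2 S φ0 πc πc' π2 π0 ω * (Y2 ω - Y0 ω - μd' (X ω)) ∂P = 0 := by
  have hA := measurableSet_evD hD1 hD2 (0, 0)
  have hWi {Z : Ω → ℝ} (hZ : Integrable Z P) : Integrable (ind (evD D1 D2 (0, 0)) * S * Z) P :=
    integrable_ind_mul_mul hA hS hS1 hZ
  have hW := integrable_ind_mul hA (integrable_of_abs_le_one (μ := P) hS hS1)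
  have hcond := condExp_mul_sub_ae_eq
    (hMAR.condExp_ind_evD_observed_mul_trend hX hΔ hD1 hD2 hS hS1 (.inl rfl) hΔi hμd') .rfl
    (stronglyMeasurable_comap_comp X hμd'.1) (stronglyMeasurable_comap_comp X hμd'.1)
    hW hW (hWi hΔi) (hWi hμd'i) (hWi (hμd'i.sub hμd'i))
  rw [sub_self, mul_zero] at hcond
  have hψ := stronglyMeasurable_comap_comp X
    (hφ0m.inv.mul ((hπcm.mul hπ2m).div (hπc'm.mul hπ0m)))
  rw [n2_eq_ind_mul, mul_right_comm] at hn2R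
  convert integral_mul_eq_of_condExp_ae_eq hX.comap_le (hWi (hΔi.sub hμd'i))
    (integrable_zero _ _ _) hcond hψ hn2R ?_ using 3 with ω
  · rw [n2_eq_ind_mul]
    exact mul_right_comm _ _ _
  · simp
  · simp

end HajekWeights

theorem statement_4_general
    [MeasurableSpace Ω] [m𝓧 : MeasurableSpace 𝓧]
    {P : Measure Ω} [IsFiniteMeasure P] {X : Ω → 𝓧} {Y0 Y2 D1 D2 S : Ω → ℝ}
    {Y0p Y2p : ℝ × ℝ → Ω → ℝ} {d : ℝ × ℝ} {q : ℝ → 𝓧 → ℝ}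
    {pd' μd μd' πc πc' π2 π0 φ2 φ0 : 𝓧 → ℝ} (hX : Measurable X)
    (hΔ : Measurable (Y2 - Y0)) (hD1 : Measurable D1) (hD2 : Measurable D2) (hS : Measurable S)
    (hΔi : Integrable (Y2 - Y0) P) (hS1 : ∀ ω, |S ω| ≤ 1)
    (hcons0 : ∀ ω, Y0 ω = Y0p (D1 ω, D2 ω) ω)
    (hcons2 : ∀ ω, Y2 ω = Y2p (D1 ω, D2 ω) ω)
    (hd2 : d.2 ∈ ({0, 1} : Set ℝ)) (hd0 : d ≠ (0, 0))
    (hY0d : Integrable (Y0p d) P) (hY2d : Integrable (Y2p d) P)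
    (hY00 : Integrable (Y0p (0, 0)) P) (hY20 : Integrable (Y2p (0, 0)) P)
    (hDIDd : DID P X D1 D2 Y0p Y2p d) (hDIDd' : DID P X D1 D2 Y0p Y2p (0, 0))
    (hMAR : MAR P X D1 D2 S Y0 Y2 q)
    (hpd' : IsCondMeanGiven P X Set.univ (ind (evD D1 D2 (0, 0))) pd')
    (hpd'pos : ∀ᵐ ω ∂P, 0 < pd' (X ω))
    (hμdi : Integrable (μd ∘ X) P) (hμd'i : Integrable (μd' ∘ X) P)
    (hπc'm : Measurable πc') (hπ2m : Measurable π2) (hπ0m : Measurable π0)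
    (hπ1 : ∀ x, |πc x| ≤ 1) (hπc'0 : ∀ x, πc' x ≠ 0) (hπ00 : ∀ x, π0 x ≠ 0)
    (hφ2m : Measurable φ2) (hφ0m : Measurable φ0)
    (hφ20 : ∀ x, φ2 x ≠ 0) (hφ00 : ∀ x, φ0 x ≠ 0)
    (hn1 : ∫ ω, n1 X D1 D2 S φ2 d ω ∂P ≠ 0)
    (hn2 : ∫ ω, n2 X D1 D2 S φ0 πc πc' π2 π0 ω ∂P ≠ 0)
    (hn4 : ∫ ω, n4 X D2 S φ2 πc d.2 ω ∂P ≠ 0)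
    (hint1 : Integrable (fun ω =>
        (n1 X D1 D2 S φ2 d ω / ∫ ω', n1 X D1 D2 S φ2 d ω' ∂P
          - n2 X D1 D2 S φ0 πc πc' π2 π0 ω / ∫ ω', n2 X D1 D2 S φ0 πc πc' π2 π0 ω' ∂P)
        * (Y2 ω - Y0 ω - μd' (X ω))) P)
    (hint2 : Integrable (fun ω =>
        (n3 X D2 πc d.2 ω / ∫ ω', n3 X D2 πc d.2 ω' ∂P
          - n4 X D2 S φ2 πc d.2 ω / ∫ ω', n4 X D2 S φ2 πc d.2 ω' ∂P)
        * (μd (X ω) - μd' (X ω))) P)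
    (hπc : IsCondMeanGiven P X (evD2 D2 d.2) (ind {ω | D1 ω = d.1}) πc)
    (hμd : IsCondMeanGiven P X (evD D1 D2 d) (Y2 - Y0) μd)
    (hμd' : IsCondMeanGiven P X (evD D1 D2 (0, 0)) (Y2 - Y0) μd') :
    tauR P X D1 D2 S Y0 Y2 d μd μd' πc πc' π2 π0 φ2 φ0 = tau P D1 D2 Y2p d := by
  have hTi : Integrable (Y2p (0, 0) - Y0p (0, 0)) P := hY20.sub hY00
  have htrend := hDIDd'.condExp_untreated_trend hX hD1 hD2 hTi hΔi hcons0 hcons2 hpd' hpd'pos hμd'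
  have hn14 := hMAR.integral_n1_eq_integral_n4 hX hΔ hD1 hD2 hS hS1 hd2 hπc hπ1 hφ2m
    (.of_integral_ne_zero hn1) (.of_integral_ne_zero hn4)
  have hn1R : Integrable (n1 X D1 D2 S φ2 d * (Y2 - Y0 - μd' ∘ X)) P :=
    integrable_left_of_div_sub_div_mul (measurableSet_evD hD1 hD2 d) hn1
      (fun ω hω => by simp [n1, ind, hω])
      (fun ω hω => by simp [n2, ind, disjoint_left.1 (disjoint_evD D1 D2 hd0) hω]) hint1
  have hn2R : Integrable (n2 X D1 D2 S φ0 πc πc' π2 π0 * (Y2 - Y0 - μd' ∘ X)) P :=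
    integrable_right_of_div_sub_div_mul hn2 hn1R hint1
  have hn3G : Integrable (n3 X D2 πc d.2 * (μd ∘ X - μd' ∘ X)) P :=
    integrable_n3_mul hX hD2 hπc.1 hπ1 (hμdi.sub hμd'i) d.2
  have hn4G : Integrable (n4 X D2 S φ2 πc d.2 * (μd ∘ X - μd' ∘ X)) P :=
    integrable_right_of_div_sub_div_mul hn4 hn3G hint2
  rw [tauR_eq hn1R hn2R hn3G hn4G, hn14,
    hMAR.integral_n1_mul_sub hX hΔ hD1 hD2 hS hS1 hd2 hΔi hπc hπ1 hμd hμdi hμd'.1 hμd'i hφ2m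
      hn1R hn4G,
    hMAR.integral_n2_mul_sub hX hΔ hD1 hD2 hS hS1 hΔi hμd' hμd'i hπc.1 hπc'm hπ2m hπ0m hφ0m hn2R,
    integral_n3_mul_sub hX hD1 hD2 hΔi hπc hπ1 hμd hμdi hμd'.1 hμd'i,
    integral_n3 hX hD1 hD2 hπc hπ1, tau,
    hDIDd.setIntegral_treatmentEffect_eq hX hD1 hD2 hY0d hY2d hTi hY00 hcons0 hcons2
      hμd'.1 hμd'i htrend]
  ring

/-- Theorem 1, case 1: the robust estimand identifies the PDATT when the propensity-score
and outcome models are correctly specified (the missing-data models are arbitrary). -/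
theorem statement_4
    [MeasurableSpace Ω] [m𝓧 : MeasurableSpace 𝓧]
    (P : Measure Ω) [IsProbabilityMeasure P]
    (X : Ω → 𝓧) (hX : Measurable X)
    (Y0 Y2 D1 D2 S : Ω → ℝ)
    (hY0 : Measurable Y0) (hY2 : Measurable Y2)
    (hD1 : Measurable D1) (hD2 : Measurable D2) (hS : Measurable S)
    (hY0i : Integrable Y0 P) (hY2i : Integrable Y2 P)
    (hD1v : ∀ ω, D1 ω = 0 ∨ D1 ω = 1) (hD2v : ∀ ω, D2 ω = 0 ∨ D2 ω = 1)
    (hSv : ∀ ω, S ω = 0 ∨ S ω = 1)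
    (Y0p Y2p : ℝ × ℝ → Ω → ℝ)
    (hY0p : ∀ e ∈ allPaths, Measurable (Y0p e) ∧ Integrable (Y0p e) P)
    (hY2p : ∀ e ∈ allPaths, Measurable (Y2p e) ∧ Integrable (Y2p e) P)
    (hcons0 : ∀ ω, Y0 ω = Y0p (D1 ω, D2 ω) ω)
    (hcons2 : ∀ ω, Y2 ω = Y2p (D1 ω, D2 ω) ω)
    (d : ℝ × ℝ) (hd : d ∈ threePaths)
    (hDIDd : DID P X D1 D2 Y0p Y2p d) (hDIDd' : DID P X D1 D2 Y0p Y2p (0, 0))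
    (q : ℝ → 𝓧 → ℝ) (hMAR : MAR P X D1 D2 S Y0 Y2 q)
    (pd pd' : 𝓧 → ℝ)
    (hpd : IsCondMeanGiven P X Set.univ (ind (evD D1 D2 d)) pd)
    (hpd' : IsCondMeanGiven P X Set.univ (ind (evD D1 D2 (0, 0))) pd')
    (hpdpos : ∀ᵐ ω ∂P, 0 < pd (X ω)) (hpd'pos : ∀ᵐ ω ∂P, 0 < pd' (X ω))
    (μd μd' πc πc' π2 π0 φ2 φ0 : 𝓧 → ℝ)
    (hμdm : Measurable μd) (hμd'm : Measurable μd')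
    (hμdi : Integrable (fun ω => μd (X ω)) P) (hμd'i : Integrable (fun ω => μd' (X ω)) P)
    (hπcm : Measurable πc) (hπc'm : Measurable πc')
    (hπ2m : Measurable π2) (hπ0m : Measurable π0)
    (hπcv : ∀ x, 0 < πc x ∧ πc x < 1) (hπc'v : ∀ x, 0 < πc' x ∧ πc' x < 1)
    (hπ2v : ∀ x, 0 < π2 x ∧ π2 x < 1) (hπ0v : ∀ x, 0 < π0 x ∧ π0 x < 1)
    (hφ2m : Measurable φ2) (hφ0m : Measurable φ0)
    (hφ2v : ∀ x, 0 < φ2 x ∧ φ2 x ≤ 1) (hφ0v : ∀ x, 0 < φ0 x ∧ φ0 x ≤ 1)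
    (hn1i : Integrable (n1 X D1 D2 S φ2 d) P)
    (hn1pos : 0 < ∫ ω, n1 X D1 D2 S φ2 d ω ∂P)
    (hn2i : Integrable (n2 X D1 D2 S φ0 πc πc' π2 π0) P)
    (hn2pos : 0 < ∫ ω, n2 X D1 D2 S φ0 πc πc' π2 π0 ω ∂P)
    (hn3i : Integrable (n3 X D2 πc d.2) P)
    (hn3pos : 0 < ∫ ω, n3 X D2 πc d.2 ω ∂P)
    (hn4i : Integrable (n4 X D2 S φ2 πc d.2) P)
    (hn4pos : 0 < ∫ ω, n4 X D2 S φ2 πc d.2 ω ∂P)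
    (hint1 : Integrable (fun ω =>
        (n1 X D1 D2 S φ2 d ω / ∫ ω', n1 X D1 D2 S φ2 d ω' ∂P
          - n2 X D1 D2 S φ0 πc πc' π2 π0 ω / ∫ ω', n2 X D1 D2 S φ0 πc πc' π2 π0 ω' ∂P)
        * (Y2 ω - Y0 ω - μd' (X ω))) P)
    (hint2 : Integrable (fun ω =>
        (n3 X D2 πc d.2 ω / ∫ ω', n3 X D2 πc d.2 ω' ∂P
          - n4 X D2 S φ2 πc d.2 ω / ∫ ω', n4 X D2 S φ2 πc d.2 ω' ∂P)
        * (μd (X ω) - μd' (X ω))) P)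
    (hπc_corr : IsCondMeanGiven P X (evD2 D2 d.2) (ind {ω | D1 ω = d.1}) πc)
    (hπ2_corr : IsCondMeanGiven P X Set.univ (ind (evD2 D2 d.2)) π2)
    (hπc'_corr : IsCondMeanGiven P X (evD2 D2 0) (ind {ω | D1 ω = 0}) πc')
    (hπ0_corr : IsCondMeanGiven P X Set.univ (ind (evD2 D2 0)) π0)
    (hμd_corr : IsCondMeanGiven P X (evD D1 D2 d) (fun ω => Y2 ω - Y0 ω) μd)
    (hμd'_corr : IsCondMeanGiven P X (evD D1 D2 (0, 0)) (fun ω => Y2 ω - Y0 ω) μd')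
    :
    tauR P X D1 D2 S Y0 Y2 d μd μd' πc πc' π2 π0 φ2 φ0 = tau P D1 D2 Y2p d := by
  have hd' : d.2 ∈ ({0, 1} : Set ℝ) ∧ d ≠ (0, 0) := by
    rcases hd with rfl | rfl | rfl <;> norm_num
  have hd4 : d ∈ allPaths := by
    rcases hd with rfl | rfl | rfl <;> simp [allPaths]
  exact statement_4_general hX (hY2.sub hY0) hD1 hD2 hS (hY2i.sub hY0i)
    (fun ω => by rcases hSv ω with h | h <;> simp [h]) hcons0 hcons2 hd'.1 hd'.2
    (hY0p d hd4).2 (hY2p d hd4).2 (hY0p _ (.inl rfl)).2 (hY2p _ (.inl rfl)).2 hDIDd hDIDd' hMAR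
    hpd' hpd'pos hμdi hμd'i hπc'm hπ2m hπ0m
    (fun x => abs_le.2 ⟨by linarith [(hπcv x).1], (hπcv x).2.le⟩)
    (fun x => (hπc'v x).1.ne') (fun x => (hπ0v x).1.ne') hφ2m hφ0m (fun x => (hφ2v x).1.ne')
    (fun x => (hφ0v x).1.ne') hn1pos.ne' hn2pos.ne' hn4pos.ne' hint1 hint2
    hπc_corr hμd_corr hμd'_corr

end DIDMissing
end
end
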